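/- Let S be an inverse semigroup. Then every diagonal inverse subsemigroup of S × S is a congruence on S if and only if S is a group (i.e., S has an identity element and every element of S has a two-sided inverse). -/

import Mathlib

/-- A semigroup is a group if it has a (two-sided) identity element with
respect to which every element has a two-sided inverse. -/
def IsGroupSG (S : Type*) [Mul S] : Prop :=
  ∃ e : S, (∀ s : S, e * s = s ∧ s * e = s) ∧
    ∀ s : S, ∃ t : S, s * t = e ∧ t * s = e

theorem idem_comm_aux {S : Type*} [Semigroup S] (inv : S → S)
    (hinv : ∀ s : S, s * inv s * s = s ∧ inv s * s * inv s = inv s)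
    (huniq : ∀ s t : S, s * t * s = s → t * s * t = t → t = inv s) :
    ∀ e f : S, e * e = e → f * f = f → (e * f) * (e * f) = e * f ∧ e * f = f * e := by
  have key : ∀ e f : S, e * e = e → f * f = f → (e * f) * (e * f) = e * f := by
    intro e f he hf
    have he' : ∀ z, e * (e * z) = e * z := fun z => by rw [← mul_assoc, he]
    have hf' : ∀ z, f * (f * z) = f * z := fun z => by rw [← mul_assoc, hf]
    obtain ⟨h1, h2⟩ := hinv (e * f)
    generalize hx : inv (e * f) = x at h1 h2
    have h3 : f * x * e = x := by
      rw [← hx]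
      apply huniq
      · rw [hx]; simp only [mul_assoc, he', hf'] at h1 ⊢; exact h1
      · rw [hx]; simp only [mul_assoc, he', hf'] at h2 ⊢
        calc f * (x * (e * (f * (x * e)))) = f * ((x * (e * (f * x))) * e) := by
              simp only [mul_assoc]
          _ = _ := by rw [h2]
    have h4 : x * x = x := by
      calc x * x = (f * x * e) * (f * x * e) := by rw [h3]
        _ = f * (x * (e * f) * x) * e := by simp only [mul_assoc]
        _ = x := by rw [h2, h3]
    have h5 : x = inv x := huniq x x (by rw [h4, h4]) (by rw [h4, h4])
    have h6 : e * f = inv x := huniq x (e * f) h2 h1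
    rw [h6, ← h5, h4]
  intro e f he hf
  have he' : ∀ z, e * (e * z) = e * z := fun z => by rw [← mul_assoc, he]
  have hf' : ∀ z, f * (f * z) = f * z := fun z => by rw [← mul_assoc, hf]
  have h1 := key e f he hf
  have h2 := key f e hf he
  refine ⟨h1, ?_⟩
  have h3 : f * e = inv (e * f) := by
    apply huniq
    · simp only [mul_assoc, he', hf'] at h1 ⊢; exact h1
    · simp only [mul_assoc, he', hf'] at h2 ⊢; exact h2
  have h4 : e * f = inv (e * f) := huniq _ _ (by rw [h1, h1]) (by rw [h1, h1])
  rw [h3, ← h4]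

/-- an inverse semigroup `S` (with inverse operation `inv`) has
the property that every diagonal *inverse* subsemigroup of `S × S` is a
congruence iff `S` is a group. -/
theorem inverse_diagonal_iff_group {S : Type*} [Semigroup S] [Nonempty S]
    (inv : S → S)
    (hinv : ∀ s : S, s * inv s * s = s ∧ inv s * s * inv s = inv s)
    (huniq : ∀ s t : S, s * t * s = s → t * s * t = t → t = inv s) :
    (∀ ρ : Set (S × S),
      (∀ x : S, (x, x) ∈ ρ) →
      (∀ p q : S × S, p ∈ ρ → q ∈ ρ → p * q ∈ ρ) →
      (∀ p : S × S, p ∈ ρ → (inv p.1, inv p.2) ∈ ρ) →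
      ((∀ x y : S, ((x, y) : S × S) ∈ ρ → ((y, x) : S × S) ∈ ρ) ∧
       (∀ x y z : S, ((x, y) : S × S) ∈ ρ → ((y, z) : S × S) ∈ ρ →
          ((x, z) : S × S) ∈ ρ)))
    ↔ IsGroupSG S := by
  have aux := idem_comm_aux inv hinv huniq
  constructor
  · intro H
    have hl : ∀ s, (s * inv s) * (s * inv s) = s * inv s := fun s => by
      rw [← mul_assoc, (hinv s).1]
    have hr : ∀ s, (inv s * s) * (inv s * s) = inv s * s := fun s => by
      rw [← mul_assoc, (hinv s).2]
    have conj : ∀ y e a : S, e * e = e → a * y * a = a → y * a * y = y →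
        (y * e * a) * (y * e * a) = y * e * a ∧ y * e * a * y = y * e := by
      intro y e a he h1 h2
      have hay : (a * y) * (a * y) = a * y := by rw [← mul_assoc, h1]
      have hc := (aux (a * y) e hay he).2
      have h3 : y * e * a * y = y * e := by
        calc y * e * a * y = y * (e * (a * y)) := by simp only [mul_assoc]
          _ = (y * a * y) * e := by rw [← hc]; simp only [mul_assoc]
          _ = y * e := by rw [h2]
      refine ⟨?_, h3⟩
      calc (y * e * a) * (y * e * a) = (y * e * a * y) * (e * a) := by simp only [mul_assoc]
        _ = y * (e * e) * a := by rw [h3]; simp only [mul_assoc]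
        _ = y * e * a := by rw [he]
    have hsym := (H {p | ∃ e, e * e = e ∧ p.1 = e * p.2} (fun x => ⟨x * inv x, hl x, (hinv x).1.symm⟩)
      (by
        rintro ⟨x, y⟩ ⟨x', y'⟩ ⟨e, he, h1⟩ ⟨f, hf, h2⟩
        simp only at h1 h2
        obtain ⟨c1, c2⟩ := conj y f (inv y) hf (hinv y).2 (hinv y).1
        refine ⟨e * (y * f * inv y), (aux _ _ he c1).1, ?_⟩
        change x * x' = e * (y * f * inv y) * (y * y')
        calc x * x' = e * (y * f) * y' := by rw [h1, h2]; simp only [mul_assoc]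
          _ = e * (y * f * inv y * y) * y' := by rw [c2]
          _ = _ := by simp only [mul_assoc])
      (by
        rintro ⟨x, y⟩ ⟨e, he, h1⟩
        simp only at h1
        obtain ⟨c1, c2⟩ := conj (inv y) e y he (hinv y).1 (hinv y).2
        refine ⟨inv y * e * y, c1, ?_⟩
        change inv x = inv y * e * y * inv y
        rw [c2, h1]
        symm
        have hc := (aux e (y * inv y) he (hl y)).2
        apply huniq
        · calc e * y * (inv y * e) * (e * y) = e * (y * inv y) * (e * e) * y := by
                simp only [mul_assoc]
            _ = (y * inv y) * (e * e) * y := by rw [hc, he, mul_assoc _ e e, he]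
            _ = e * (y * inv y * y) := by rw [he, ← hc]; simp only [mul_assoc]
            _ = e * y := by rw [(hinv y).1]
        · calc inv y * e * (e * y) * (inv y * e) = inv y * ((e * e) * (y * inv y)) * e := by
                simp only [mul_assoc]
            _ = inv y * y * inv y * (e * e) := by rw [he, hc]; simp only [mul_assoc, he]
            _ = inv y * e := by rw [he, (hinv y).2])).1
    have h1 : ∀ e f : S, e * e = e → f * f = f → f * e = f := by
      intro e f he hf
      obtain ⟨g, _, h⟩ := hsym (e * f) f ⟨e, he, rfl⟩
      change f = g * (e * f) at h
      have hc := (aux e f he hf).2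
      calc f * e = g * (e * f) * e := by rw [← h]
        _ = g * (f * (e * e)) := by rw [hc]; simp only [mul_assoc]
        _ = f := by rw [he, ← hc, ← h]
    have h2 : ∀ e f : S, e * e = e → f * f = f → e = f := by
      intro e f he hf
      rw [← h1 e f he hf, ← (aux e f he hf).2, h1 f e hf he]
    obtain ⟨a⟩ := ‹Nonempty S›
    refine ⟨a * inv a, fun s => ⟨?_, ?_⟩, fun s => ⟨inv s, h2 _ _ (hl s) (hl a),
      h2 _ _ (hr s) (hl a)⟩⟩
    · rw [h2 _ _ (hl a) (hl s), (hinv s).1]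
    · rw [h2 _ _ (hl a) (hr s), ← mul_assoc, (hinv s).1]
  · rintro ⟨e, he, hg⟩ ρ hd hm hi
    have hs : ∀ s, s * inv s = e ∧ inv s * s = e := by
      intro s
      obtain ⟨t, h1, h2⟩ := hg s
      have : t = inv s := huniq s t (by rw [h1, (he s).1]) (by rw [h2, (he t).1])
      rw [← this]; exact ⟨h1, h2⟩
    constructor
    · intro x y h
      have := hm _ _ (hm _ _ (hd y) (hi _ h)) (hd x)
      simpa only [Prod.mk_mul_mk, mul_assoc, (hs _).2, (he _).2, ← mul_assoc y (inv y),
        (hs _).1, (he _).1] using this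
    · intro x y z h h'
      have := hm _ _ (hm _ _ h (hd (inv y))) h'
      simpa only [Prod.mk_mul_mk, (hs _).1, (he _).1, mul_assoc x, (hs _).2, (he _).2] using this
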